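/- Let K be a field of characteristic zero and let A₁ be the first Weyl algebra. If P, Q ∈ A₁ satisfy [P,Q] = 1 and at least one of m(P) = 1 or m(Q) = 1 holds, then there exists a K-algebra automorphism τ of A₁ such that P = τ(Y) and Q = τ(X). -/

import Mathlib

open Polynomial

noncomputable section

variable (K : Type) [Field K] [CharZero K]

/-- Defining relation of the first Weyl algebra: `Y*X = X*Y + 1`, i.e. `[Y,X] = 1`
(`true` encodes `X`, `false` encodes `Y`). -/
inductive WeylRel : FreeAlgebra K Bool → FreeAlgebra K Bool → Prop
  | comm : WeylRel (FreeAlgebra.ι K false * FreeAlgebra.ι K true)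
      (FreeAlgebra.ι K true * FreeAlgebra.ι K false + 1)

/-- The first Weyl algebra `A₁ = K⟨X,Y | YX - XY = 1⟩`. -/
abbrev Weyl : Type := RingQuot (WeylRel K)

/-- The generator `X` of the Weyl algebra. -/
def Wx : Weyl K := RingQuot.mkAlgHom K (WeylRel K) (FreeAlgebra.ι K true)

/-- The generator `Y` of the Weyl algebra. -/
def Wy : Weyl K := RingQuot.mkAlgHom K (WeylRel K) (FreeAlgebra.ι K false)

/-- The element `H = Y*X`. -/
def WH : Weyl K := Wy K * Wx K

/-- `X^n` for `n ≥ 0` and `Y^{-n}` for `n < 0`. -/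
def weight (n : ℤ) : Weyl K := if 0 ≤ n then Wx K ^ n.toNat else Wy K ^ (-n).toNat

/-- The `n`-th homogeneous component `A_{1,n}` of the `ℤ`-grading of the Weyl algebra:
`K[H]·Xⁿ` for `n ≥ 0` and `K[H]·Y^{-n}` for `n < 0`. -/
def component (n : ℤ) : Submodule K (Weyl K) :=
  LinearMap.range ((LinearMap.mulRight K (weight K n)).comp
    (Polynomial.aeval (WH K)).toLinearMap)

/-!
The Weyl algebra acts on `K[X]` by `X ↦ X·` and `Y ↦ d/dX`, faithfully in characteristic zero.
Suppose `[P, Q] = 1` with `P = p(H)Xᵐ`. Then `P` sends `Xⁿ` to `p(n+m+1)Xⁿ⁺ᵐ`, while the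
coefficient of `Xⁿ` in `Q(Xⁿ⁺ᵐ)` is `(n+1)⋯(n+m)·r(n)` for some polynomial `r`. Comparing
diagonal matrix entries, `G(n) = p(n+m+1)·(n+1)⋯(n+m)·r(n)` satisfies `G(n) - G(n+m) = 1`, so
`G` has degree at most one; as its degree is at least `deg p + m` and `m ≠ 0`, we get `P = cX`
with `c ≠ 0`. After rescaling, `Q + Y` lies in the centralizer `K[X]` of `X`, and `(P, Q)` is the
image of `(Y, X)` under a Fourier automorphism followed by a shear. The case `P = p(H)Yᵐ` and the
exchange of the roles of `P` and `Q` are again handled by the Fourier automorphism.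
-/

attribute [local instance] LieRing.ofAssociativeRing

theorem natDegree_le_one_of_eval_natCast_add {R : Type*} [CommRing R] [IsDomain R] [CharZero R]
    {G : R[X]} {m : ℕ} {c : R} (hm : m ≠ 0)
    (hG : ∀ n : ℕ, G.eval ((n + m : ℕ) : R) = G.eval (n : R) + c) : G.natDegree ≤ 1 := by
  have hm' : (m : R) ≠ 0 := Nat.cast_ne_zero.mpr hm
  have eval_mul_step (k : ℕ) : G.eval ((k * m : ℕ) : R) = G.eval 0 + k * c := by
    induction k with
    | zero => simp
    | succ k ih =>
      rw [Nat.succ_mul, hG, ih]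
      push_cast
      ring
  have eq_linear : C (m : R) * G = C c * X + C (m * G.eval 0) := by
    refine eq_of_infinite_eval_eq _ _
      ((Set.infinite_range_of_injective (f := fun k : ℕ => ((k * m : ℕ) : R)) ?_).mono ?_)
    · exact Nat.cast_injective.comp (mul_left_injective₀ hm)
    · rintro _ ⟨k, rfl⟩
      simp only [Set.mem_ofPred_eq, eval_mul, eval_C, eval_mul_step, eval_add, eval_X]
      push_cast
      ring
  rw [← natDegree_C_mul hm', eq_linear]
  exact natDegree_linear_le

theorem eval_ascPochhammer_comp_X_add_one {R : Type*} [CommSemiring R] (m n : ℕ) :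
    ((ascPochhammer R m).comp (X + 1)).eval (n : R) = ((n + m).descFactorial m : R) := by
  have h := ascPochhammer_nat_eq_natCast_descFactorial R (n + 1) m
  rw [show n + 1 + m - 1 = n + m by lia] at h
  simpa using h

theorem add_descFactorial_add (n m a : ℕ) :
    (n + m).descFactorial (m + a) = (n + m).descFactorial m * n.descFactorial a := by
  have h := Nat.descFactorial_mul_descFactorial (n := n + m) (Nat.le_add_right m a)
  rw [Nat.add_sub_cancel, Nat.add_sub_cancel_left] at h
  rw [← h, mul_comm]

section Commutator

variable {A : Type*} [Ring A]

theorem lie_mul_eq_lie_mul_add_mul_lie (a b c : A) : ⁅a, b * c⁆ = ⁅a, b⁆ * c + b * ⁅a, c⁆ := by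
  simp only [Ring.lie_def]
  noncomm_ring

theorem mul_neg_eq_one_sub_mul_of_lie_eq_one {x y : A} (h : ⁅y, x⁆ = 1) :
    x * -y = 1 - y * x := by
  rw [← h, Ring.lie_def]
  noncomm_ring

theorem commute_add_of_lie_eq_one {x y q : A} (hyx : ⁅y, x⁆ = 1) (hxq : ⁅x, q⁆ = 1) :
    Commute x (q + y) := by
  rw [commute_iff_lie_eq, lie_add, hxq, ← lie_skew, hyx, add_neg_cancel]

variable {R : Type*} [CommRing R] [Algebra R A] {x y : A}

theorem lie_smul_smul_eq_one (h : ⁅y, x⁆ = 1) {c d : R} (hdc : d * c = 1) :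
    ⁅d • y, c • x⁆ = 1 := by
  rw [Ring.lie_def, smul_mul_smul_comm, smul_mul_smul_comm, mul_comm c, hdc, one_smul, one_smul]
  exact h

theorem lie_add_aeval_eq_one (h : ⁅y, x⁆ = 1) (g : R[X]) : ⁅y + aeval x g, x⁆ = 1 := by
  have hcomm : Commute (aeval x g) x := by
    simpa only [aeval_X] using (Commute.all g X).map (aeval x)
  rw [add_lie, h, hcomm.lie_eq, add_zero]

theorem lie_aeval_eq_aeval_derivative (h : ⁅y, x⁆ = 1) (f : R[X]) :
    ⁅y, aeval x f⁆ = aeval x (derivative f) := by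
  induction f using Polynomial.induction_on with
  | C a => simpa [Ring.lie_def, sub_eq_zero] using (Algebra.commutes a y).symm
  | add f g hf hg => simp only [map_add, lie_add, hf, hg]
  | monomial n a ih =>
    rw [pow_succ, ← mul_assoc, map_mul, lie_mul_eq_lie_mul_add_mul_lie, ih, aeval_X, h,
      derivative_mul (f := C a * X ^ n), derivative_X]
    simp only [map_add, map_mul, aeval_X, map_one]

end Commutator

namespace Weyl

variable {F : Type} [Field F]

section Presentation

theorem lie_Wy_Wx : ⁅Wy F, Wx F⁆ = 1 := by
  have h := RingQuot.mkAlgHom_rel F (WeylRel.comm (K := F))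
  rw [map_mul, map_add, map_mul, map_one] at h
  exact sub_eq_iff_eq_add'.mpr h

variable {A : Type*} [Ring A] [Algebra F A]

/-- The universal property of the Weyl algebra: elements `x`, `y` with `[y, x] = 1` determine an
algebra homomorphism with `X ↦ x` and `Y ↦ y`. -/
def lift (x y : A) (h : ⁅y, x⁆ = 1) : Weyl F →ₐ[F] A :=
  RingQuot.liftAlgHom F ⟨FreeAlgebra.lift F fun t : Bool => if t then x else y, by
    rintro _ _ ⟨⟩
    simpa using sub_eq_iff_eq_add'.mp h⟩

@[simp]
theorem lift_Wx (x y : A) (h : ⁅y, x⁆ = 1) : lift x y h (Wx F) = x := by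
  simp [lift, Wx]

@[simp]
theorem lift_Wy (x y : A) (h : ⁅y, x⁆ = 1) : lift x y h (Wy F) = y := by
  simp [lift, Wy]

theorem algHom_ext {f g : Weyl F →ₐ[F] A} (hx : f (Wx F) = g (Wx F))
    (hy : f (Wy F) = g (Wy F)) : f = g := by
  refine RingQuot.ringQuot_ext' _ _ _ (FreeAlgebra.hom_ext (funext fun t => ?_))
  cases t
  · exact hy
  · exact hx

theorem eq_top_of_one_mem_of_mul_mem {S : Submodule F (Weyl F)} (one_mem : 1 ∈ S)
    (Wx_mul_mem : ∀ s ∈ S, Wx F * s ∈ S) (Wy_mul_mem : ∀ s ∈ S, Wy F * s ∈ S) : S = ⊤ := by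
  refine Submodule.eq_top_iff'.mpr fun q => ?_
  obtain ⟨w, rfl⟩ := RingQuot.mkAlgHom_surjective F (WeylRel F) q
  suffices mul_mem : ∀ s ∈ S, RingQuot.mkAlgHom F (WeylRel F) w * s ∈ S by
    simpa using mul_mem 1 one_mem
  induction w using FreeAlgebra.induction with
  | grade0 r =>
    intro s hs
    rw [AlgHom.commutes, ← Algebra.smul_def]
    exact S.smul_mem r hs
  | grade1 t =>
    cases t
    · exact Wy_mul_mem
    · exact Wx_mul_mem
  | mul a b ha hb =>
    intro s hs
    rw [map_mul, mul_assoc]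
    exact ha _ (hb _ hs)
  | add a b ha hb =>
    intro s hs
    rw [map_add, add_mul]
    exact S.add_mem (ha _ hs) (hb _ hs)

end Presentation

section NormalOrdering

variable (F) in
/-- The normally ordered element `∑ g_b(X) Y^b` of the Weyl algebra with coefficients `g_b`. -/
def normalOrder : (ℕ →₀ F[X]) →ₗ[F] Weyl F :=
  Finsupp.lsum F fun b => (LinearMap.mulRight F (Wy F ^ b)).comp (aeval (Wx F)).toLinearMap

@[simp]
theorem normalOrder_single (b : ℕ) (g : F[X]) :
    normalOrder F (Finsupp.single b g) = aeval (Wx F) g * Wy F ^ b := by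
  simp [normalOrder]

theorem Wx_mul_normalOrder_mem_range (c : ℕ →₀ F[X]) :
    Wx F * normalOrder F c ∈ LinearMap.range (normalOrder F) := by
  induction c using Finsupp.induction_linear with
  | zero => simp
  | add c d hc hd => simpa only [map_add, mul_add] using add_mem hc hd
  | single b g => exact ⟨Finsupp.single b (X * g), by
    rw [normalOrder_single, normalOrder_single, map_mul, aeval_X, mul_assoc]⟩

theorem Wy_mul_normalOrder_mem_range (c : ℕ →₀ F[X]) :
    Wy F * normalOrder F c ∈ LinearMap.range (normalOrder F) := by
  induction c using Finsupp.induction_linear with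
  | zero => simp
  | add c d hc hd => simpa only [map_add, mul_add] using add_mem hc hd
  | single b g =>
    refine ⟨Finsupp.single b (derivative g) + Finsupp.single (b + 1) g, ?_⟩
    rw [map_add, normalOrder_single, normalOrder_single, normalOrder_single,
      ← lie_aeval_eq_aeval_derivative lie_Wy_Wx, Ring.lie_def, sub_mul,
      pow_succ']
    simp only [mul_assoc, sub_add_cancel]

theorem normalOrder_surjective : Function.Surjective (normalOrder F) := by
  refine LinearMap.range_eq_top.mp (eq_top_of_one_mem_of_mul_mem ?_ ?_ ?_)
  · exact ⟨Finsupp.single 0 1, by simp⟩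
  · rintro _ ⟨c, rfl⟩
    exact Wx_mul_normalOrder_mem_range c
  · rintro _ ⟨c, rfl⟩
    exact Wy_mul_normalOrder_mem_range c

end NormalOrdering

section PolynomialRepresentation

variable (F) in
theorem lie_derivative_lmul_X :
    ⁅(derivative : Module.End F F[X]), Algebra.lmul F F[X] X⁆ = 1 := by
  refine LinearMap.ext fun f => ?_
  simp [Ring.lie_def]

variable (F) in
/-- The representation of the Weyl algebra on `F[X]` by polynomial differential operators: `X` acts
by multiplication and `Y` by differentiation. -/
def polyRep : Weyl F →ₐ[F] Module.End F F[X] :=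
  lift (Algebra.lmul F F[X] X) derivative (lie_derivative_lmul_X F)

theorem polyRep_aeval_Wx (g f : F[X]) : polyRep F (aeval (Wx F) g) f = g * f := by
  have h : polyRep F (aeval (Wx F) g) = Algebra.lmul F F[X] g := by
    rw [← aeval_algHom_apply, polyRep, lift_Wx, aeval_algHom_apply, aeval_X_left_apply]
  rw [h, Algebra.coe_lmul_eq_mul, LinearMap.mul_apply']

theorem polyRep_Wx (f : F[X]) : polyRep F (Wx F) f = X * f := by
  simpa using polyRep_aeval_Wx X f

theorem polyRep_Wx_pow (m : ℕ) (f : F[X]) : polyRep F (Wx F ^ m) f = X ^ m * f := by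
  simpa using polyRep_aeval_Wx (X ^ m) f

theorem polyRep_Wy (f : F[X]) : polyRep F (Wy F) f = derivative f := by
  rw [polyRep, lift_Wy]

theorem polyRep_Wy_pow (b : ℕ) (f : F[X]) : polyRep F (Wy F ^ b) f = derivative^[b] f := by
  rw [map_pow, polyRep, lift_Wy, Module.End.pow_apply]

theorem polyRep_WH_X_pow (n : ℕ) : polyRep F (WH F) (X ^ n) = ((n : F) + 1) • X ^ n := by
  rw [WH, map_mul, Module.End.mul_apply, polyRep_Wx, polyRep_Wy, ← pow_succ',
    derivative_X_pow_succ, smul_eq_C_mul]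

theorem polyRep_aeval_Wx_mul_Wy_pow_X_pow (g : F[X]) (b n : ℕ) :
    polyRep F (aeval (Wx F) g * Wy F ^ b) (X ^ n)
      = (n.descFactorial b : F) • (g * X ^ (n - b)) := by
  rw [map_mul, Module.End.mul_apply, polyRep_Wy_pow, iterate_derivative_X_pow_eq_smul,
    polyRep_aeval_Wx, mul_smul_comm]

theorem polyRep_aeval_WH_mul_Wx_pow_X_pow (p : F[X]) (m n : ℕ) :
    polyRep F (aeval (WH F) p * Wx F ^ m) (X ^ n)
      = p.eval (((n + m : ℕ) : F) + 1) • X ^ (n + m) := by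
  have hH : (polyRep F (WH F)).HasEigenvector (((n + m : ℕ) : F) + 1) (X ^ (n + m)) :=
    ⟨Module.End.mem_eigenspace_iff.mpr (polyRep_WH_X_pow _), pow_ne_zero _ X_ne_zero⟩
  rw [map_mul, Module.End.mul_apply, polyRep_Wx_pow, ← pow_add, add_comm m n, ← aeval_algHom_apply,
    Module.End.aeval_apply_of_hasEigenvector hH]

theorem coeff_polyRep_aeval_WH_mul_Wx_pow (p f : F[X]) (m n : ℕ) :
    (polyRep F (aeval (WH F) p * Wx F ^ m) f).coeff (n + m)
      = p.eval (((n + m : ℕ) : F) + 1) * f.coeff n := by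
  induction f using Polynomial.induction_on' with
  | add f g hf hg => simp only [map_add, coeff_add, hf, hg, mul_add]
  | monomial k a =>
    rw [← C_mul_X_pow_eq_monomial, ← smul_eq_C_mul, map_smul, polyRep_aeval_WH_mul_Wx_pow_X_pow]
    simp only [coeff_smul, coeff_X_pow, add_left_inj, smul_eq_mul]
    split_ifs with h
    · subst h
      ring
    · simp

theorem exists_coeff_polyRep_X_pow_add (Q : Weyl F) (m : ℕ) :
    ∃ r : F[X], ∀ n : ℕ, (polyRep F Q (X ^ (n + m))).coeff n
      = ((ascPochhammer F m).comp (X + 1) * r).eval (n : F) := by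
  obtain ⟨c, rfl⟩ := normalOrder_surjective Q
  simp only [eval_mul, eval_ascPochhammer_comp_X_add_one]
  induction c using Finsupp.induction_linear with
  | zero => exact ⟨0, by simp⟩
  | add c d hc hd =>
    obtain ⟨r, hr⟩ := hc
    obtain ⟨s, hs⟩ := hd
    exact ⟨r + s, fun n => by simp [hr, hs, mul_add]⟩
  | single b g =>
    simp only [normalOrder_single, polyRep_aeval_Wx_mul_Wy_pow_X_pow, coeff_smul, smul_eq_mul,
      coeff_mul_X_pow']
    obtain hb | ⟨a, rfl⟩ := (lt_or_ge b m).imp_right Nat.exists_eq_add_of_le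
    · exact ⟨0, fun n => by rw [if_neg (by lia)]; simp⟩
    · refine ⟨C (g.coeff a) * descPochhammer F a, fun n => ?_⟩
      rw [add_descFactorial_add, eval_mul, eval_C, descPochhammer_eval_eq_descFactorial,
        if_pos (by lia)]
      obtain hn | hn := lt_or_ge n a
      · simp [Nat.descFactorial_of_lt hn]
      · rw [show n - (n + m - (m + a)) = a by lia]
        push_cast
        ring

end PolynomialRepresentation

section Faithfulness

variable [CharZero F]

theorem eq_zero_of_polyRep_normalOrder_eq_zero {c : ℕ →₀ F[X]}
    (h : polyRep F (normalOrder F c) = 0) : c = 0 := by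
  ext1 b
  induction b using Nat.strong_induction_on with
  | _ b ih =>
    -- On `X ^ b` the terms with `Y`-exponent above `b` vanish, and by induction those below do too.
    have apply_X_pow : polyRep F (normalOrder F c) (X ^ b) = (b.factorial : F) • c b := by
      simp only [normalOrder, Finsupp.lsum_apply, Finsupp.sum, LinearMap.comp_apply,
        AlgHom.toLinearMap_apply, LinearMap.mulRight_apply, map_sum, LinearMap.sum_apply,
        polyRep_aeval_Wx_mul_Wy_pow_X_pow]
      rw [Finset.sum_eq_single b]
      · simp [Nat.descFactorial_self]
      · intro j _ hj
        obtain hj | hj := lt_or_gt_of_ne hj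
        · simp [ih j hj]
        · simp [Nat.descFactorial_of_lt hj]
      · intro hb
        simp [Finsupp.notMem_support_iff.mp hb]
    rw [h, LinearMap.zero_apply] at apply_X_pow
    exact (smul_eq_zero.mp apply_X_pow.symm).resolve_left (Nat.cast_ne_zero.mpr b.factorial_ne_zero)

theorem polyRep_injective : Function.Injective (polyRep F) := by
  refine (injective_iff_map_eq_zero _).mpr fun q hq => ?_
  obtain ⟨c, rfl⟩ := normalOrder_surjective q
  rw [eq_zero_of_polyRep_normalOrder_eq_zero hq, map_zero]

theorem exists_eq_aeval_Wx_of_commute {q : Weyl F} (h : Commute (Wx F) q) :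
    ∃ g : F[X], q = aeval (Wx F) g := by
  refine ⟨polyRep F q 1, polyRep_injective ?_⟩
  have apply_X_pow (n : ℕ) : polyRep F q (X ^ n) = X ^ n * polyRep F q 1 := by
    have hn := congrArg (fun w => polyRep F w 1) (h.pow_left n).eq
    simpa only [map_mul, Module.End.mul_apply, polyRep_Wx_pow, mul_one] using hn.symm
  ext1 n
  ext1
  simp only [LinearMap.comp_apply, monomial_one_right_eq_X_pow, apply_X_pow, polyRep_aeval_Wx]
  exact mul_comm _ _

end Faithfulness

section Homogeneous

theorem diagonal_coeff_of_lie_eq_one {p : F[X]} {m : ℕ} {Q : Weyl F}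
    (h : ⁅aeval (WH F) p * Wx F ^ m, Q⁆ = 1) (n : ℕ) :
    p.eval (((n + m : ℕ) : F) + 1) * (polyRep F Q (X ^ (n + m))).coeff n
      - p.eval (((n + m + m : ℕ) : F) + 1) * (polyRep F Q (X ^ (n + m + m))).coeff (n + m) = 1 := by
  have hdiag := congrArg (fun w => (polyRep F w (X ^ (n + m))).coeff (n + m)) h
  simpa only [Ring.lie_def, map_sub, map_mul (polyRep F) _ Q, map_mul (polyRep F) Q,
    LinearMap.sub_apply, Module.End.mul_apply, coeff_sub, coeff_polyRep_aeval_WH_mul_Wx_pow,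
    polyRep_aeval_WH_mul_Wx_pow_X_pow, map_smul, coeff_smul, smul_eq_mul, map_one,
    Module.End.one_apply, coeff_X_pow_self] using hdiag

variable [CharZero F]

theorem eq_one_and_natDegree_eq_zero_of_lie_eq_one {p : F[X]} {m : ℕ} {Q : Weyl F}
    (h : ⁅aeval (WH F) p * Wx F ^ m, Q⁆ = 1) : m = 1 ∧ p.natDegree = 0 := by
  obtain ⟨r, hr⟩ := exists_coeff_polyRep_X_pow_add Q m
  set G : F[X] := p.comp (X + C ((m : F) + 1)) * ((ascPochhammer F m).comp (X + C 1) * r) with hG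
  have eval_G (n : ℕ) : G.eval (n : F)
      = p.eval (((n + m : ℕ) : F) + 1) * (polyRep F Q (X ^ (n + m))).coeff n := by
    rw [hr, hG, eval_mul, eval_comp, C_1]
    simp [add_assoc]
  have step (n : ℕ) : G.eval (n : F) - G.eval ((n + m : ℕ) : F) = 1 := by
    rw [eval_G, eval_G, diagonal_coeff_of_lie_eq_one h]
  have m_ne_zero : m ≠ 0 := by
    rintro rfl
    simpa using step 0
  have G_ne_zero : G ≠ 0 := by
    intro hG0
    simpa [hG0] using step 0
  have natDegree_G : G.natDegree ≤ 1 :=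
    natDegree_le_one_of_eval_natCast_add (c := -1) m_ne_zero fun n => by
      linear_combination -step n
  have right_ne_zero := right_ne_zero_of_mul G_ne_zero
  rw [hG, natDegree_mul (left_ne_zero_of_mul G_ne_zero) right_ne_zero,
    natDegree_mul (left_ne_zero_of_mul right_ne_zero) (right_ne_zero_of_mul right_ne_zero),
    natDegree_comp, natDegree_comp, natDegree_X_add_C, natDegree_X_add_C,
    ascPochhammer_natDegree] at natDegree_G
  lia

theorem exists_eq_smul_Wx_of_lie_eq_one {p : F[X]} {m : ℕ} {Q : Weyl F}
    (h : ⁅aeval (WH F) p * Wx F ^ m, Q⁆ = 1) :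
    ∃ c : F, c ≠ 0 ∧ aeval (WH F) p * Wx F ^ m = c • Wx F := by
  have : Nontrivial (Weyl F) := (polyRep F).toRingHom.domain_nontrivial
  obtain ⟨rfl, hp⟩ := eq_one_and_natDegree_eq_zero_of_lie_eq_one h
  obtain ⟨c, rfl⟩ := natDegree_eq_zero.mp hp
  refine ⟨c, ?_, by simp [Algebra.smul_def]⟩
  rintro rfl
  simp at h

end Homogeneous

section Automorphisms

variable (F) in
/-- The Fourier automorphism `X ↦ -Y`, `Y ↦ X`, which exchanges the components of degrees `n` and
`-n`. -/
def fourier : Weyl F ≃ₐ[F] Weyl F :=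
  AlgEquiv.ofAlgHom
    (lift (-Wy F) (Wx F) (by rw [lie_neg, lie_skew, lie_Wy_Wx]))
    (lift (Wy F) (-Wx F) (by rw [neg_lie, lie_skew, lie_Wy_Wx]))
    (algHom_ext (by simp) (by simp)) (algHom_ext (by simp) (by simp))

@[simp]
theorem fourier_Wx : fourier F (Wx F) = -Wy F := lift_Wx _ _ _

@[simp]
theorem fourier_Wy : fourier F (Wy F) = Wx F := lift_Wy _ _ _

@[simp]
theorem fourier_symm_Wx : (fourier F).symm (Wx F) = Wy F := lift_Wx _ _ _

@[simp]
theorem fourier_symm_Wy : (fourier F).symm (Wy F) = -Wx F := lift_Wy _ _ _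

theorem fourier_aeval_WH_mul_Wy_pow (p : F[X]) (n : ℕ) :
    fourier F (aeval (WH F) p * Wy F ^ n) = aeval (WH F) (p.comp (1 - X)) * Wx F ^ n := by
  have fourier_WH : fourier F (WH F) = 1 - WH F := by
    rw [WH, map_mul, fourier_Wx, fourier_Wy, mul_neg_eq_one_sub_mul_of_lie_eq_one lie_Wy_Wx]
  rw [map_mul, map_pow, fourier_Wy, ← aeval_algHom_apply, fourier_WH, aeval_comp, map_sub, map_one,
    aeval_X]

/-- The shear automorphism `X ↦ X`, `Y ↦ Y + g(X)`, inverse to the shear by `-g`. -/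
def shear (g : F[X]) : Weyl F ≃ₐ[F] Weyl F :=
  AlgEquiv.ofAlgHom
    (lift (Wx F) (Wy F + aeval (Wx F) g) (lie_add_aeval_eq_one lie_Wy_Wx g))
    (lift (Wx F) (Wy F + aeval (Wx F) (-g)) (lie_add_aeval_eq_one lie_Wy_Wx (-g)))
    (algHom_ext (by simp) (by simp [← aeval_algHom_apply]))
    (algHom_ext (by simp) (by simp [← aeval_algHom_apply]))

@[simp]
theorem shear_Wx (g : F[X]) : shear g (Wx F) = Wx F := lift_Wx _ _ _

@[simp]
theorem shear_Wy (g : F[X]) : shear g (Wy F) = Wy F + aeval (Wx F) g := lift_Wy _ _ _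

/-- The rescaling automorphism `X ↦ cX`, `Y ↦ c⁻¹Y`. -/
def rescale (c : Fˣ) : Weyl F ≃ₐ[F] Weyl F :=
  AlgEquiv.ofAlgHom
    (lift ((c : F) • Wx F) ((c⁻¹ : Fˣ).val • Wy F) (lie_smul_smul_eq_one lie_Wy_Wx c.inv_mul))
    (lift ((c⁻¹ : Fˣ).val • Wx F) ((c : F) • Wy F) (lie_smul_smul_eq_one lie_Wy_Wx c.mul_inv))
    (algHom_ext (by simp [smul_smul]) (by simp [smul_smul]))
    (algHom_ext (by simp [smul_smul]) (by simp [smul_smul]))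

@[simp]
theorem rescale_Wx (c : Fˣ) : rescale c (Wx F) = (c : F) • Wx F := lift_Wx _ _ _

end Automorphisms

section CanonicalPairs

/-- `(P, Q)` is the image of the pair of generators `(Y, X)` under an automorphism. -/
def IsCanonicalPair (P Q : Weyl F) : Prop :=
  ∃ τ : Weyl F ≃ₐ[F] Weyl F, P = τ (Wy F) ∧ Q = τ (Wx F)

theorem IsCanonicalPair.map {P Q : Weyl F} (h : IsCanonicalPair P Q) (φ : Weyl F ≃ₐ[F] Weyl F) :
    IsCanonicalPair (φ P) (φ Q) := by
  obtain ⟨τ, rfl, rfl⟩ := h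
  exact ⟨τ.trans φ, rfl, rfl⟩

theorem IsCanonicalPair.of_swap_neg {P Q : Weyl F} (h : IsCanonicalPair Q (-P)) :
    IsCanonicalPair P Q := by
  obtain ⟨τ, hQ, hP⟩ := h
  exact ⟨(fourier F).symm.trans τ, by simp [← hP], by simp [← hQ]⟩

variable [CharZero F]

theorem isCanonicalPair_Wx_of_lie_eq_one {Q : Weyl F} (h : ⁅Wx F, Q⁆ = 1) :
    IsCanonicalPair (Wx F) Q := by
  obtain ⟨g, hg⟩ := exists_eq_aeval_Wx_of_commute (commute_add_of_lie_eq_one lie_Wy_Wx h)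
  exact ⟨(fourier F).trans (shear (-g)), by simp, by simp [← hg]⟩

theorem isCanonicalPair_of_lie_aeval_WH_mul_Wx_pow {p : F[X]} {m : ℕ} {Q : Weyl F}
    (h : ⁅aeval (WH F) p * Wx F ^ m, Q⁆ = 1) :
    IsCanonicalPair (aeval (WH F) p * Wx F ^ m) Q := by
  obtain ⟨c, hc, hP⟩ := exists_eq_smul_Wx_of_lie_eq_one h
  let φ := rescale (Units.mk0 c hc)
  have hφ : φ (Wx F) = c • Wx F := rescale_Wx _
  rw [hP, ← hφ] at h ⊢
  have hQ : ⁅Wx F, φ.symm Q⁆ = 1 := by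
    simpa [Ring.lie_def] using congrArg φ.symm h
  simpa using (isCanonicalPair_Wx_of_lie_eq_one hQ).map φ

theorem isCanonicalPair_of_lie_aeval_WH_mul_Wy_pow {p : F[X]} {m : ℕ} {Q : Weyl F}
    (h : ⁅aeval (WH F) p * Wy F ^ m, Q⁆ = 1) :
    IsCanonicalPair (aeval (WH F) p * Wy F ^ m) Q := by
  have lie_fourier : ⁅aeval (WH F) (p.comp (1 - X)) * Wx F ^ m, fourier F Q⁆ = 1 := by
    rw [← fourier_aeval_WH_mul_Wy_pow, Ring.lie_def, ← map_mul, ← map_mul, ← map_sub,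
      ← Ring.lie_def, h, map_one]
  have hpair := (isCanonicalPair_of_lie_aeval_WH_mul_Wx_pow lie_fourier).map (fourier F).symm
  rwa [← fourier_aeval_WH_mul_Wy_pow, AlgEquiv.symm_apply_apply, AlgEquiv.symm_apply_apply] at hpair

theorem isCanonicalPair_of_mem_component {i : ℤ} {P Q : Weyl F} (hP : P ∈ component F i)
    (h : ⁅P, Q⁆ = 1) : IsCanonicalPair P Q := by
  obtain ⟨p, rfl⟩ := hP
  simp only [LinearMap.comp_apply, AlgHom.toLinearMap_apply, LinearMap.mulRight_apply, weight]
    at h ⊢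
  split_ifs at h ⊢
  · exact isCanonicalPair_of_lie_aeval_WH_mul_Wx_pow h
  · exact isCanonicalPair_of_lie_aeval_WH_mul_Wy_pow h

end CanonicalPairs

end Weyl

/-- **Corollary.** If `[P,Q] = 1` in the first Weyl algebra and at least one of `P`, `Q` is a
nonzero homogeneous element (mass `1`), then `P = τ(Y)`, `Q = τ(X)` for some automorphism `τ`. -/
theorem dixmier_mass_one
    (P Q : Weyl K)
    (hm : (∃ i : ℤ, P ∈ component K i ∧ P ≠ 0) ∨ (∃ j : ℤ, Q ∈ component K j ∧ Q ≠ 0))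
    (hPQ : P * Q - Q * P = 1) :
    ∃ τ : Weyl K ≃ₐ[K] Weyl K, P = τ (Wy K) ∧ Q = τ (Wx K) := by
  rcases hm with ⟨_, hP, -⟩ | ⟨_, hQ, -⟩
  · exact Weyl.isCanonicalPair_of_mem_component hP hPQ
  · have hQP : ⁅Q, -P⁆ = 1 := by rwa [lie_neg, lie_skew]
    exact (Weyl.isCanonicalPair_of_mem_component hQ hQP).of_swap_neg
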